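/- Let D be a *-SH domain and let I be a *-invertible integral *-ideal of D. Then I is expressible, uniquely up to order, as a *-product of mutually *-comaximal *-homogeneous ideals. -/

import Mathlib

open scoped nonZeroDivisors

/-- A star operation on the nonzero fractional ideals of an integral domain `D`
with quotient field `K`: it fixes nonzero principal fractional ideals, commutes with
multiplication by nonzero principal fractional ideals, is extensive, monotone and
idempotent (on nonzero fractional ideals). -/
structure StarOperation (D K : Type*) [CommRing D] [IsDomain D] [Field K]
    [Algebra D K] [IsFractionRing D K] where
  star : FractionalIdeal D⁰ K → FractionalIdeal D⁰ K
  star_spanSingleton : ∀ x : K, x ≠ 0 →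
    star (FractionalIdeal.spanSingleton D⁰ x) = FractionalIdeal.spanSingleton D⁰ x
  star_smul : ∀ (x : K) (I : FractionalIdeal D⁰ K), x ≠ 0 → I ≠ 0 →
    star (FractionalIdeal.spanSingleton D⁰ x * I) = FractionalIdeal.spanSingleton D⁰ x * star I
  le_star : ∀ I : FractionalIdeal D⁰ K, I ≠ 0 → I ≤ star I
  star_mono : ∀ I J : FractionalIdeal D⁰ K, I ≠ 0 → J ≠ 0 → I ≤ J → star I ≤ star J
  star_idem : ∀ I : FractionalIdeal D⁰ K, I ≠ 0 → star (star I) = star I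

namespace StarOperation

variable {D K : Type*} [CommRing D] [IsDomain D] [Field K] [Algebra D K] [IsFractionRing D K]
variable (s : StarOperation D K)

/-- `*` has finite character: for every nonzero fractional ideal `I`, `I^*` is the union
of `J^*` over the nonzero finitely generated fractional subideals `J` of `I`. -/
def FiniteCharacter : Prop :=
  ∀ I : FractionalIdeal D⁰ K, I ≠ 0 → ∀ x ∈ s.star I,
    ∃ J : FractionalIdeal D⁰ K, J ≠ 0 ∧ (J : Submodule D K).FG ∧ J ≤ I ∧ x ∈ s.star J

/-- A (nonzero) integral ideal `I` of `D` is a `*`-ideal if `I^* = I`. -/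
def IsStarIdeal (I : Ideal D) : Prop :=
  I ≠ ⊥ ∧ s.star (I : FractionalIdeal D⁰ K) = (I : FractionalIdeal D⁰ K)

/-- An integral ideal `I` of `D` is a `*`-ideal of finite type if `I = J^*` for some
nonzero finitely generated ideal `J`. -/
def IsFiniteTypeStarIdeal (I : Ideal D) : Prop :=
  ∃ J : Ideal D, J ≠ ⊥ ∧ J.FG ∧
    s.star (J : FractionalIdeal D⁰ K) = (I : FractionalIdeal D⁰ K)

/-- A maximal `*`-ideal: maximal among proper integral `*`-ideals. -/
def IsMaxStarIdeal (M : Ideal D) : Prop :=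
  M ≠ ⊤ ∧ s.IsStarIdeal M ∧ ∀ J : Ideal D, J ≠ ⊤ → s.IsStarIdeal J → M ≤ J → J = M

/-- `I` is `*`-homogeneous: a proper `*`-ideal of finite type such that `(J + J')^* ≠ D`
for every pair `J`, `J'` of proper `*`-ideals of finite type containing `I`. -/
def IsHomog (I : Ideal D) : Prop :=
  I ≠ ⊤ ∧ s.IsStarIdeal I ∧ s.IsFiniteTypeStarIdeal I ∧
    ∀ J J' : Ideal D, J ≠ ⊤ → J' ≠ ⊤ → s.IsStarIdeal J → s.IsStarIdeal J' →
      s.IsFiniteTypeStarIdeal J → s.IsFiniteTypeStarIdeal J' → I ≤ J → I ≤ J' →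
      s.star ((J + J' : Ideal D) : FractionalIdeal D⁰ K) ≠ 1

/-- The set `M(I) = {x ∈ D : (xD + I)^* ≠ D}` attached to an ideal `I`. -/
def MSet (I : Ideal D) : Set D :=
  {x : D | s.star ((Ideal.span {x} + I : Ideal D) : FractionalIdeal D⁰ K) ≠ 1}

/-- `A` and `B` are `*`-comaximal if `(A + B)^* = D`. -/
def StarComaximal (A B : Ideal D) : Prop :=
  s.star ((A + B : Ideal D) : FractionalIdeal D⁰ K) = 1

/-- An integral ideal `I` is `*`-invertible if `(I · I⁻¹)^* = D`. -/
def StarInvertible (I : Ideal D) : Prop :=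
  s.star ((I : FractionalIdeal D⁰ K) * (I : FractionalIdeal D⁰ K)⁻¹) = 1

/-- `D` is a `*`-SH domain: every principal ideal generated by a nonzero nonunit is a
`*`-product of finitely many `*`-homogeneous ideals. -/
def IsSHDomain : Prop :=
  ∀ x : D, x ≠ 0 → ¬IsUnit x →
    ∃ T : Multiset (Ideal D), (∀ J ∈ T, s.IsHomog J) ∧
      s.star ((T.prod : Ideal D) : FractionalIdeal D⁰ K) =
        ((Ideal.span {x} : Ideal D) : FractionalIdeal D⁰ K)

/-- `D` has finite `*`-character: every nonzero nonunit lies in only finitely many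
maximal `*`-ideals. -/
def FiniteStarCharacter : Prop :=
  ∀ x : D, x ≠ 0 → ¬IsUnit x → {P : Ideal D | s.IsMaxStarIdeal P ∧ x ∈ P}.Finite

end StarOperation

namespace StarOperation

section Aux

variable {D K : Type*} [CommRing D] [IsDomain D] [Field K] [Algebra D K] [IsFractionRing D K]
variable (s : StarOperation D K)

open FractionalIdeal

theorem aux_exists (I : Ideal D) (hI : I ≠ ⊥) :
    ∃ J : Ideal D, (J : FractionalIdeal D⁰ K) = s.star (I : FractionalIdeal D⁰ K) := by
  rw [← le_one_iff_exists_coeIdeal]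
  have h1 : s.star 1 = 1 := by
    have := s.star_spanSingleton 1 one_ne_zero
    simpa using this
  calc s.star (I : FractionalIdeal D⁰ K) ≤ s.star 1 :=
        s.star_mono _ _ (by rwa [Ne, coeIdeal_eq_zero]) one_ne_zero coeIdeal_le_one
    _ = 1 := h1

open Classical in
/-- The closure operation induced on integral ideals (with the zero ideal closed). -/
noncomputable def cl (I : Ideal D) : Ideal D :=
  if h : I = ⊥ then ⊥ else (s.aux_exists I h).choose

theorem coe_cl {I : Ideal D} (hI : I ≠ ⊥) :
    ((s.cl I : Ideal D) : FractionalIdeal D⁰ K) = s.star (I : FractionalIdeal D⁰ K) := by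
  rw [cl, dif_neg hI]
  exact (s.aux_exists I hI).choose_spec

theorem cl_bot : s.cl (⊥ : Ideal D) = ⊥ := by
  rw [cl, dif_pos rfl]

theorem coe_ne {I : Ideal D} (hI : I ≠ ⊥) : (I : FractionalIdeal D⁰ K) ≠ 0 := by
  rwa [Ne, coeIdeal_eq_zero]

theorem le_cl (I : Ideal D) : I ≤ s.cl I := by
  by_cases hI : I = ⊥
  · rw [hI]; exact bot_le
  · rw [← coeIdeal_le_coeIdeal K, s.coe_cl hI]
    exact s.le_star _ (coe_ne hI)

theorem cl_ne {I : Ideal D} (hI : I ≠ ⊥) : s.cl I ≠ ⊥ :=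
  fun h => hI (le_bot_iff.1 (h ▸ s.le_cl I))

theorem cl_mono {I J : Ideal D} (h : I ≤ J) : s.cl I ≤ s.cl J := by
  by_cases hI : I = ⊥
  · rw [hI, cl_bot]; exact bot_le
  · have hJ : J ≠ ⊥ := fun hJ => hI (le_bot_iff.1 (hJ ▸ h))
    rw [← coeIdeal_le_coeIdeal K, s.coe_cl hI, s.coe_cl hJ]
    exact s.star_mono _ _ (coe_ne hI) (coe_ne hJ) ((coeIdeal_le_coeIdeal K).2 h)

theorem cl_idem (I : Ideal D) : s.cl (s.cl I) = s.cl I := by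
  by_cases hI : I = ⊥
  · rw [hI, cl_bot, cl_bot]
  · apply coeIdeal_injective (K := K)
    change ((s.cl (s.cl I) : Ideal D) : FractionalIdeal D⁰ K) = (s.cl I : Ideal D)
    rw [s.coe_cl (s.cl_ne hI), s.coe_cl hI, s.star_idem _ (coe_ne hI)]

theorem cl_le {I J : Ideal D} (h : I ≤ s.cl J) : s.cl I ≤ s.cl J :=
  (s.cl_mono h).trans (s.cl_idem J).le

theorem mul_cl (I J : Ideal D) : I * s.cl J ≤ s.cl (I * J) := by
  by_cases hJ : J = ⊥
  · subst hJ; simp [cl_bot]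
  rw [Ideal.mul_le]
  intro x hx y hy
  by_cases hx0 : x = 0
  · simp [hx0]
  have hx1 : algebraMap D K x ≠ 0 := by
    simpa using hx0
  have hle : Ideal.span {x} * J ≤ I * J :=
    Ideal.mul_mono_left (by rwa [Ideal.span_singleton_le_iff_mem])
  apply s.cl_mono hle
  have hne : Ideal.span {x} * J ≠ ⊥ := by
    rw [Ne, Ideal.mul_eq_bot]; simp [hx0, hJ]
  have h2 : ((Ideal.span {x} * s.cl J : Ideal D) : FractionalIdeal D⁰ K) =
      (s.cl (Ideal.span {x} * J) : Ideal D) := by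
    rw [s.coe_cl hne, coeIdeal_mul, coeIdeal_mul, coeIdeal_span_singleton,
      s.star_smul _ _ hx1 (coe_ne hJ), s.coe_cl hJ]
  rw [← coeIdeal_injective h2]
  exact Ideal.mul_mem_mul (Ideal.mem_span_singleton_self x) hy

theorem cl_mul_cl (I J : Ideal D) : s.cl I * s.cl J ≤ s.cl (I * J) := by
  refine (s.mul_cl _ _).trans (s.cl_le ?_)
  rw [mul_comm, mul_comm I]
  exact s.mul_cl _ _

theorem cl_mul_cl_eq (I J : Ideal D) : s.cl (s.cl I * s.cl J) = s.cl (I * J) :=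
  le_antisymm (s.cl_le (s.cl_mul_cl I J)) (s.cl_mono (Ideal.mul_mono (s.le_cl I) (s.le_cl J)))

theorem cl_cl_mul (I J : Ideal D) : s.cl (s.cl I * J) = s.cl (I * J) := by
  rw [← s.cl_mul_cl_eq, cl_idem, cl_mul_cl_eq]

theorem cl_sup_cl (I J : Ideal D) : s.cl (s.cl I ⊔ s.cl J) = s.cl (I ⊔ J) :=
  le_antisymm (s.cl_le (sup_le (s.cl_mono le_sup_left) (s.cl_mono le_sup_right)))
    (s.cl_mono (sup_le_sup (s.le_cl I) (s.le_cl J)))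

/-- comaximality, in terms of the closure -/
def Cx (A B : Ideal D) : Prop := s.cl (A ⊔ B) = ⊤

variable {s}

theorem Cx.symm {A B : Ideal D} (h : s.Cx A B) : s.Cx B A := by
  rw [Cx, sup_comm]; exact h

theorem Cx.mono {A B A' B' : Ideal D} (h : s.Cx A B) (hA : A ≤ A') (hB : B ≤ B') :
    s.Cx A' B' :=
  top_le_iff.1 (h.ge.trans (s.cl_mono (sup_le_sup hA hB)))

theorem cl_top : s.cl (⊤ : Ideal D) = ⊤ := top_le_iff.1 (s.le_cl _)

theorem sup_mul_sup_aux (A B C : Ideal D) : (A ⊔ B) * (A ⊔ C) ≤ A ⊔ B * C := by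
  rw [Ideal.sup_mul, Ideal.mul_sup B]
  refine sup_le ?_ (sup_le ?_ ?_)
  · exact le_sup_of_le_left (Ideal.mul_le_left (I := A))
  · exact le_sup_of_le_left (Ideal.mul_le_right (J := A))
  · exact le_sup_right

theorem Cx.mul {A B C : Ideal D} (h : s.Cx A B) (h' : s.Cx A C) : s.Cx A (B * C) := by
  have h1 := s.cl_mul_cl (A ⊔ B) (A ⊔ C)
  rw [h, h', Ideal.top_mul] at h1
  refine top_le_iff.1 (h1.trans (s.cl_mono ?_))
  exact sup_mul_sup_aux A B C

theorem Cx.prod {A : Ideal D} {l : List (Ideal D)} (h : ∀ B ∈ l, s.Cx A B) :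
    s.Cx A l.prod := by
  induction l with
  | nil => rw [List.prod_nil, Ideal.one_eq_top, Cx, sup_top_eq, cl_top]
  | cons B l ih =>
    rw [List.prod_cons]
    exact (h B (by simp)).mul (ih fun C hC => h C (by simp [hC]))

theorem Cx.cl_right {A B : Ideal D} (h : s.Cx A B) : s.Cx A (s.cl B) :=
  h.mono le_rfl (s.le_cl B)

/-- If `P` is comaximal to `B` and `A * P ≤ B` with `B` closed, then `A ≤ B`. -/
theorem Cx.le_of_mul_le {A B P : Ideal D} (h : s.Cx B P) (hB : s.cl B = B) (hm : A * P ≤ B) :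
    A ≤ B := by
  have h1 := s.mul_cl A (B ⊔ P)
  rw [show s.cl (B ⊔ P) = ⊤ from h, Ideal.mul_top] at h1
  refine h1.trans ((s.cl_mono ?_).trans hB.le)
  rw [Ideal.mul_sup]
  exact sup_le Ideal.mul_le_right hm

theorem Cx.inf_le {X Y : Ideal D} (h : s.Cx X Y) : X ⊓ Y ≤ s.cl (X * Y) := by
  have h1 := s.mul_cl (X ⊓ Y) (X ⊔ Y)
  rw [show s.cl (X ⊔ Y) = ⊤ from h, Ideal.mul_top] at h1
  refine h1.trans (s.cl_mono ?_)
  rw [Ideal.mul_sup]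
  refine sup_le ?_ ?_
  · rw [mul_comm]; exact Ideal.mul_mono_right inf_le_right
  · exact Ideal.mul_mono_left inf_le_left

variable (s)

/-- The closure of `I` is of finite type. -/
def FT (I : Ideal D) : Prop := ∃ J : Ideal D, J ≠ ⊥ ∧ J.FG ∧ s.cl J = s.cl I

variable {s}

theorem FT.ne_bot {I : Ideal D} (h : s.FT I) : I ≠ ⊥ := by
  rintro rfl
  obtain ⟨J, h1, -, h2⟩ := h
  rw [cl_bot] at h2
  exact s.cl_ne h1 h2

theorem FT.sup {A B : Ideal D} (hA : s.FT A) (hB : s.FT B) : s.FT (A ⊔ B) := by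
  obtain ⟨J, h1, h2, h3⟩ := hA
  obtain ⟨J', h1', h2', h3'⟩ := hB
  refine ⟨J ⊔ J', fun h => h1 (sup_eq_bot_iff.1 h).1, Submodule.FG.sup h2 h2', ?_⟩
  rw [← cl_sup_cl, h3, h3', cl_sup_cl]

theorem FT.mul {A B : Ideal D} (hA : s.FT A) (hB : s.FT B) : s.FT (A * B) := by
  obtain ⟨J, h1, h2, h3⟩ := hA
  obtain ⟨J', h1', h2', h3'⟩ := hB
  refine ⟨J * J', by rw [Ne, Ideal.mul_eq_bot]; tauto, Submodule.FG.mul h2 h2', ?_⟩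
  rw [← cl_mul_cl_eq, h3, h3', cl_mul_cl_eq]

theorem FT.cl {A : Ideal D} (hA : s.FT A) : s.FT (s.cl A) := by
  obtain ⟨J, h1, h2, h3⟩ := hA
  exact ⟨J, h1, h2, by rw [h3, cl_idem]⟩

theorem star_eq_iff {A B : Ideal D} (hA : A ≠ ⊥) :
    s.star (A : FractionalIdeal D⁰ K) = (B : FractionalIdeal D⁰ K) ↔ s.cl A = B := by
  rw [← s.coe_cl hA]
  exact coeIdeal_injective.eq_iff

theorem star_eq_one_iff {A : Ideal D} (hA : A ≠ ⊥) :
    s.star (A : FractionalIdeal D⁰ K) = 1 ↔ s.cl A = ⊤ := by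
  rw [← star_eq_iff hA, coeIdeal_top]

theorem isStarIdeal_iff {A : Ideal D} : s.IsStarIdeal A ↔ A ≠ ⊥ ∧ s.cl A = A :=
  and_congr_right fun h => star_eq_iff h

theorem isFT_iff {A : Ideal D} (hA : s.cl A = A) : s.IsFiniteTypeStarIdeal A ↔ s.FT A := by
  constructor
  · rintro ⟨J, h1, h2, h3⟩
    exact ⟨J, h1, h2, by rw [(star_eq_iff h1).1 h3, hA]⟩
  · rintro ⟨J, h1, h2, h3⟩
    exact ⟨J, h1, h2, by rw [star_eq_iff h1, h3, hA]⟩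

theorem comax_iff {A B : Ideal D} (hA : A ≠ ⊥) : s.StarComaximal A B ↔ s.Cx A B :=
  star_eq_one_iff (fun h => hA (sup_eq_bot_iff.1 h).1)

theorem homog_iff {I : Ideal D} : s.IsHomog I ↔ I ≠ ⊤ ∧ s.cl I = I ∧ s.FT I ∧
    ∀ J J' : Ideal D, s.FT J → s.FT J' → I ≤ J → I ≤ J' → s.cl J ≠ ⊤ → s.cl J' ≠ ⊤ →
      ¬ s.Cx J J' := by
  constructor
  · rintro ⟨h1, h2, h3, h4⟩
    rw [isStarIdeal_iff] at h2
    refine ⟨h1, h2.2, (isFT_iff h2.2).1 h3, ?_⟩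
    intro J J' hJ hJ' hI hI' hn hn' hc
    have hb := s.cl_ne hJ.ne_bot
    refine h4 (s.cl J) (s.cl J') hn hn'
      (isStarIdeal_iff.2 ⟨hb, s.cl_idem _⟩)
      (isStarIdeal_iff.2 ⟨s.cl_ne hJ'.ne_bot, s.cl_idem _⟩)
      ((isFT_iff (s.cl_idem _)).2 hJ.cl) ((isFT_iff (s.cl_idem _)).2 hJ'.cl)
      (hI.trans (s.le_cl _)) (hI'.trans (s.le_cl _)) ?_
    exact (comax_iff hb).2 (hc.mono (s.le_cl _) (s.le_cl _))
  · rintro ⟨h1, h2, h3, h4⟩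
    refine ⟨h1, isStarIdeal_iff.2 ⟨h3.ne_bot, h2⟩, (isFT_iff h2).2 h3, ?_⟩
    intro J J' hn hn' hJ hJ' hF hF' hI hI' hc
    rw [isStarIdeal_iff] at hJ hJ'
    rw [isFT_iff hJ.2] at hF
    rw [isFT_iff hJ'.2] at hF'
    exact h4 J J' hF hF' hI hI' (by rwa [hJ.2]) (by rwa [hJ'.2]) ((comax_iff hJ.1).1 hc)

theorem IsHomog.ft {I : Ideal D} (h : s.IsHomog I) : s.FT I := (homog_iff.1 h).2.2.1
theorem IsHomog.cl_eq {I : Ideal D} (h : s.IsHomog I) : s.cl I = I := (homog_iff.1 h).2.1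
theorem IsHomog.ne_top {I : Ideal D} (h : s.IsHomog I) : I ≠ ⊤ := h.1

theorem IsHomog.not_cx_self {I : Ideal D} (h : s.IsHomog I) : ¬ s.Cx I I := by
  rw [Cx, sup_idem, h.cl_eq]; exact h.1

theorem IsHomog.key {B X Y : Ideal D} (h : s.IsHomog B) (hX : s.FT X) (hY : s.FT Y)
    (h1 : ¬ s.Cx X B) (h2 : ¬ s.Cx B Y) : ¬ s.Cx (X ⊔ B) Y := by
  intro hc
  exact (homog_iff.1 h).2.2.2 (X ⊔ B) (B ⊔ Y) (hX.sup h.ft) (h.ft.sup hY) le_sup_right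
    le_sup_left h1 h2 (hc.mono le_rfl le_sup_right)

theorem IsHomog.trans {A B C : Ideal D} (hA : s.IsHomog A) (hB : s.IsHomog B)
    (hC : s.IsHomog C) (h1 : ¬ s.Cx A B) (h2 : ¬ s.Cx B C) : ¬ s.Cx A C :=
  fun h => hB.key hA.ft hC.ft h1 h2 (h.mono le_sup_left le_rfl)

theorem IsHomog.of_le {A B : Ideal D} (hA : s.IsHomog A) (hB : s.FT B) (hle : A ≤ B)
    (hn : s.cl B ≠ ⊤) : s.IsHomog (s.cl B) := by
  rw [homog_iff]
  refine ⟨hn, s.cl_idem _, hB.cl, ?_⟩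
  intro J J' hJ hJ' h h'
  have := hle.trans (s.le_cl B)
  exact (homog_iff.1 hA).2.2.2 J J' hJ hJ' (this.trans h) (this.trans h')

theorem IsHomog.mul {A B : Ideal D} (hA : s.IsHomog A) (hB : s.IsHomog B) (h : ¬ s.Cx A B) :
    s.IsHomog (s.cl (A * B)) := by
  have hh : ∀ J : Ideal D, A * B ≤ J → s.cl J ≠ ⊤ → ¬ (s.Cx J A ∧ s.Cx J B) := by
    rintro J hJ hn ⟨h1, h2⟩
    apply hn
    have := h1.mul h2
    rwa [Cx, sup_eq_left.2 hJ] at this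
  have hh2 : ∀ J : Ideal D, s.FT J → A * B ≤ J → s.cl J ≠ ⊤ → ¬ s.Cx (J ⊔ A) B := by
    intro J hF hJ hn
    by_cases h1 : s.Cx J A
    · have h2 : ¬ s.Cx J B := fun h2 => hh J hJ hn ⟨h1, h2⟩
      have := hB.key hF hA.ft h2 (fun h' => h h'.symm)
      intro hc
      apply this
      rw [Cx] at hc ⊢
      rwa [sup_right_comm]
    · exact hA.key hF hB.ft h1 h
  rw [homog_iff]
  refine ⟨?_, s.cl_idem _, (hA.ft.mul hB.ft).cl, ?_⟩
  · intro ht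
    exact hA.1 (top_le_iff.1 (ht.ge.trans ((s.cl_mono Ideal.mul_le_left).trans hA.cl_eq.le)))
  · intro J J' hJ hJ' hl hl' hn hn' hc
    have hle := (s.le_cl (A * B)).trans hl
    have hle' := (s.le_cl (A * B)).trans hl'
    have h1 := hh2 J hJ hle hn
    have h2 := hh2 J' hJ' hle' hn'
    refine (homog_iff.1 hB).2.2.2 (J ⊔ A ⊔ B) (J' ⊔ A ⊔ B) ((hJ.sup hA.ft).sup hB.ft)
      ((hJ'.sup hA.ft).sup hB.ft) le_sup_right le_sup_right h1 h2 (hc.mono ?_ ?_)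
    · exact le_sup_left.trans le_sup_left
    · exact le_sup_left.trans le_sup_left

/-- Grouping. -/
theorem grouping (l : List (Ideal D)) (hl : ∀ J ∈ l, s.IsHomog J) :
    ∃ l' : List (Ideal D), (∀ J ∈ l', s.IsHomog J) ∧ l'.Pairwise s.Cx ∧
      s.cl l'.prod = s.cl l.prod := by
  classical
  induction l with
  | nil => exact ⟨[], by simp, List.Pairwise.nil, rfl⟩
  | cons A l ih =>
    obtain ⟨l', h1, h2, h3⟩ := ih fun J hJ => hl J (by simp [hJ])
    have hA := hl A (by simp)
    have h3' : s.cl (A * l'.prod) = s.cl (A :: l).prod := by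
      rw [List.prod_cons, ← cl_mul_cl_eq, h3, cl_mul_cl_eq]
    by_cases hc : ∀ B ∈ l', s.Cx A B
    · exact ⟨A :: l', by simpa using ⟨hA, h1⟩, List.pairwise_cons.2 ⟨hc, h2⟩, by
        rw [List.prod_cons]; exact h3'⟩
    · push Not at hc
      obtain ⟨B, hB, hAB⟩ := hc
      have hp := List.perm_cons_erase hB
      have h2' := (hp.pairwise_iff (R := s.Cx) Cx.symm).1 h2
      rw [List.pairwise_cons] at h2'
      have hm : ∀ C ∈ l'.erase B, s.IsHomog C := fun C hC => h1 C (List.mem_of_mem_erase hC)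
      refine ⟨s.cl (A * B) :: l'.erase B, ?_, ?_, ?_⟩
      · simpa using ⟨hA.mul (h1 B hB) hAB, hm⟩
      · refine List.pairwise_cons.2 ⟨fun C hC => ?_, h2'.2⟩
        have hBC := h2'.1 C hC
        have hAC : s.Cx A C := by
          by_contra hAC
          exact (h1 B hB).trans hA (hm C hC) (fun h => hAB h.symm) hAC hBC
        exact (hAC.symm.mul hBC.symm).cl_right.symm
      · rw [← h3', List.prod_cons, cl_cl_mul, hp.prod_eq, List.prod_cons, mul_assoc]

theorem refine_list {I : Ideal D} (hI : s.FT I) (l : List (Ideal D))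
    (hl : ∀ J ∈ l, s.IsHomog J) (hp : l.Pairwise s.Cx) :
    ∃ l' : List (Ideal D), (∀ J ∈ l', s.IsHomog J) ∧ l'.Pairwise s.Cx ∧
      (∀ J ∈ l', ∃ A ∈ l, A ≤ J) ∧ s.cl l'.prod = s.cl (I ⊔ l.prod) := by
  induction l with
  | nil => exact ⟨[], by simp, List.Pairwise.nil, by simp, by simp⟩
  | cons A l ih =>
    rw [List.pairwise_cons] at hp
    obtain ⟨l', h1, h2, h3, h4⟩ := ih (fun J hJ => hl J (by simp [hJ])) hp.2
    have hA := hl A (by simp)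
    have hAP : s.Cx A l.prod := Cx.prod hp.1
    have e : s.cl (I ⊔ (A :: l).prod) = s.cl ((I ⊔ A) * (I ⊔ l.prod)) := by
      rw [List.prod_cons]
      apply le_antisymm
      · apply s.cl_le
        refine le_trans ?_ (hAP.mono (le_sup_right (a := I)) (le_sup_right (a := I))).inf_le
        exact sup_le (le_inf le_sup_left le_sup_left)
          (le_inf (Ideal.mul_le_left.trans le_sup_right) (Ideal.mul_le_right.trans le_sup_right))
      · apply s.cl_mono
        exact sup_mul_sup_aux I A _
    by_cases hc : s.cl (I ⊔ A) = ⊤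
    · refine ⟨l', h1, h2, fun J hJ => ?_, ?_⟩
      · obtain ⟨B, hB, hBJ⟩ := h3 J hJ
        exact ⟨B, by simp [hB], hBJ⟩
      · rw [e, h4, ← cl_cl_mul, hc, Ideal.top_mul]
    · refine ⟨s.cl (I ⊔ A) :: l', ?_, ?_, ?_, ?_⟩
      · simpa using ⟨hA.of_le (hI.sup hA.ft) le_sup_right hc, h1⟩
      · refine List.pairwise_cons.2 ⟨fun J hJ => ?_, h2⟩
        obtain ⟨B, hB, hBJ⟩ := h3 J hJ
        exact (hp.1 B hB).mono (le_sup_right.trans (s.le_cl _)) hBJ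
      · intro J hJ
        rcases List.mem_cons.1 hJ with rfl | hJ
        · exact ⟨A, by simp, le_sup_right.trans (s.le_cl _)⟩
        · obtain ⟨B, hB, hBJ⟩ := h3 J hJ
          exact ⟨B, by simp [hB], hBJ⟩
      · rw [e, List.prod_cons, ← cl_mul_cl_eq, h4, cl_idem, cl_mul_cl_eq]

theorem uniq_aux {l u : List (Ideal D)} (hl : ∀ J ∈ l, s.IsHomog J)
    (hu : ∀ J ∈ u, s.IsHomog J) (pl : l.Pairwise s.Cx) (pu : u.Pairwise s.Cx)
    (h : s.cl l.prod = s.cl u.prod) : l ⊆ u := by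
  classical
  intro A hA
  have hAh := hl A hA
  have pA := List.perm_cons_erase hA
  have pl' := (pA.pairwise_iff (R := s.Cx) Cx.symm).1 pl
  rw [List.pairwise_cons] at pl'
  have eA : l.prod = A * (l.erase A).prod := by rw [pA.prod_eq, List.prod_cons]
  have hex : ∃ B ∈ u, ¬ s.Cx A B := by
    by_contra hcon
    push Not at hcon
    have h1 := (Cx.prod hcon).cl_right
    rw [← h] at h1
    refine hAh.not_cx_self (h1.mono le_rfl ?_)
    rw [← hAh.cl_eq, eA, hAh.cl_eq]
    exact (s.cl_mono Ideal.mul_le_left).trans hAh.cl_eq.le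
  obtain ⟨B, hB, hAB⟩ := hex
  have hBh := hu B hB
  have pB := List.perm_cons_erase hB
  have pu' := (pB.pairwise_iff (R := s.Cx) Cx.symm).1 pu
  rw [List.pairwise_cons] at pu'
  have eB : u.prod = B * (u.erase B).prod := by rw [pB.prod_eq, List.prod_cons]
  have c1 : s.Cx B (l.erase A).prod := by
    refine Cx.prod fun C hC => ?_
    by_contra hBC
    exact hAh.trans hBh (hl C (List.mem_of_mem_erase hC)) hAB hBC (pl'.1 C hC)
  have c2 : s.Cx A (u.erase B).prod := by
    refine Cx.prod fun C hC => ?_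
    by_contra hAC
    exact hBh.trans hAh (hu C (List.mem_of_mem_erase hC)) (fun h => hAB h.symm) hAC (pu'.1 C hC)
  have l1 : A ≤ B := by
    refine c1.le_of_mul_le hBh.cl_eq ?_
    rw [← eA]
    refine (s.le_cl _).trans (h.le.trans ?_)
    rw [eB]
    exact (s.cl_mono Ideal.mul_le_left).trans hBh.cl_eq.le
  have l2 : B ≤ A := by
    refine c2.le_of_mul_le hAh.cl_eq ?_
    rw [← eB]
    refine (s.le_cl _).trans (h.ge.trans ?_)
    rw [eA]
    exact (s.cl_mono Ideal.mul_le_left).trans hAh.cl_eq.le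
  rwa [le_antisymm l1 l2]

theorem nodup_aux {l : List (Ideal D)} (hl : ∀ J ∈ l, s.IsHomog J) (pl : l.Pairwise s.Cx) :
    l.Nodup := by
  refine (List.Pairwise.imp_of_mem ?_ pl)
  rintro A B hA - hc rfl
  exact (hl A hA).not_cx_self hc

theorem prod_ne_bot {l : List (Ideal D)} (hl : ∀ J ∈ l, s.IsHomog J) : l.prod ≠ ⊥ := by
  intro h
  have : (0 : Ideal D) ∈ l := List.prod_eq_zero_iff.1 h
  exact (hl _ this).ft.ne_bot rfl

theorem pairwise_iff_aux {l : List (Ideal D)} (hl : ∀ J ∈ l, s.IsHomog J) :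
    l.Pairwise s.StarComaximal ↔ l.Pairwise s.Cx :=
  List.Pairwise.iff_of_mem fun hA _ => comax_iff (hl _ hA).ft.ne_bot

theorem fg_aux (I : Ideal D) (X : FractionalIdeal D⁰ K) (N : Submodule D K) (hN : N.FG) :
    N ≤ (((I : FractionalIdeal D⁰ K) * X : FractionalIdeal D⁰ K) : Submodule D K) →
    ∃ A : Ideal D, A.FG ∧ A ≤ I ∧
      N ≤ (((A : FractionalIdeal D⁰ K) * X : FractionalIdeal D⁰ K) : Submodule D K) := by
  have mono : ∀ A B : Ideal D, A ≤ B → (A : FractionalIdeal D⁰ K) * X ≤ B * X := by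
    intro A B h
    exact mul_le_mul_left ((coeIdeal_le_coeIdeal K).2 h) X
  induction N, hN using Submodule.fg_induction with
  | singleton x =>
    intro h
    have hx : x ∈ (I : FractionalIdeal D⁰ K) * X := h (Submodule.mem_span_singleton_self x)
    suffices h : ∃ A : Ideal D, A.FG ∧ A ≤ I ∧ x ∈ (A : FractionalIdeal D⁰ K) * X by
      obtain ⟨A, h1, h2, h3⟩ := h
      exact ⟨A, h1, h2, (Submodule.span_singleton_le_iff_mem _ _).2 h3⟩
    refine FractionalIdeal.mul_induction_on hx ?_ ?_
    · intro i hi j hj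
      obtain ⟨a, ha, rfl⟩ := (mem_coeIdeal _).1 hi
      refine ⟨Ideal.span {a}, ⟨{a}, by simp⟩, by rwa [Ideal.span_singleton_le_iff_mem], ?_⟩
      exact mul_mem_mul ((mem_coeIdeal _).2 ⟨a, Ideal.mem_span_singleton_self a, rfl⟩) hj
    · rintro y z ⟨A, h1, h2, h3⟩ ⟨B, h1', h2', h3'⟩
      refine ⟨A ⊔ B, Submodule.FG.sup h1 h1', sup_le h2 h2', ?_⟩
      exact Submodule.add_mem
        ((((A ⊔ B : Ideal D) : FractionalIdeal D⁰ K) * X : FractionalIdeal D⁰ K) : Submodule D K)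
        (mono _ _ le_sup_left h3) (mono _ _ le_sup_right h3')
  | sup N₁ N₂ _ _ ih1 ih2 =>
    intro h
    obtain ⟨A, h1, h2, h3⟩ := ih1 (le_sup_left.trans h)
    obtain ⟨B, h1', h2', h3'⟩ := ih2 (le_sup_right.trans h)
    exact ⟨A ⊔ B, Submodule.FG.sup h1 h1', sup_le h2 h2',
      sup_le (h3.trans (mono _ _ le_sup_left)) (h3'.trans (mono _ _ le_sup_right))⟩

theorem ft_of_inv (hs : s.FiniteCharacter) {I : Ideal D} (hI : I ≠ ⊥)
    (hinv : s.StarInvertible I) : s.FT I := by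
  have hne : (I : FractionalIdeal D⁰ K) * (I : FractionalIdeal D⁰ K)⁻¹ ≠ 0 := by
    intro h0
    obtain ⟨x, hx, hx0⟩ := Submodule.exists_mem_ne_zero_of_ne_bot hI
    have h1 : algebraMap D K x * 1 ∈ (I : FractionalIdeal D⁰ K) * (I : FractionalIdeal D⁰ K)⁻¹ := by
      refine mul_mem_mul ((mem_coeIdeal _).2 ⟨x, hx, rfl⟩) ?_
      rw [mem_inv_iff (coe_ne hI)]
      intro y hy
      rw [one_mul]
      exact coeIdeal_le_one hy
    rw [h0, FractionalIdeal.mem_zero_iff] at h1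
    simp [hx0] at h1
  obtain ⟨J, hJ0, hJfg, hJle, hJ1⟩ := hs _ hne 1 (by rw [hinv]; exact one_mem_one _)
  obtain ⟨A, hA, hAI, hJA⟩ := fg_aux I _ _ hJfg hJle
  have hJA' : J ≤ (A : FractionalIdeal D⁰ K) * (I : FractionalIdeal D⁰ K)⁻¹ := hJA
  have hAX : (A : FractionalIdeal D⁰ K) * (I : FractionalIdeal D⁰ K)⁻¹ ≠ 0 := by
    intro h
    rw [h] at hJA'
    exact hJ0 (le_antisymm hJA' (FractionalIdeal.zero_le J))
  have hA0 : A ≠ ⊥ := by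
    rintro rfl
    simp at hAX
  have h1 := s.star_mono _ _ hJ0 hAX hJA' hJ1
  refine ⟨A, hA0, hA, le_antisymm (s.cl_mono hAI) (s.cl_le ?_)⟩
  intro x hx
  by_cases hx0 : x = 0
  · simp [hx0]
  have hx1 : algebraMap D K x ≠ 0 := by simpa using hx0
  have hle : spanSingleton D⁰ (algebraMap D K x) *
      ((A : FractionalIdeal D⁰ K) * (I : FractionalIdeal D⁰ K)⁻¹) ≤ A := by
    calc _ ≤ (I : FractionalIdeal D⁰ K) *
          ((A : FractionalIdeal D⁰ K) * (I : FractionalIdeal D⁰ K)⁻¹) := by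
            refine mul_le_mul_left ?_ _
            rw [spanSingleton_le_iff_mem]
            exact (mem_coeIdeal _).2 ⟨x, hx, rfl⟩
      _ = A * (I * (1 / (I : FractionalIdeal D⁰ K))) := by
            rw [← inv_eq]; ring
      _ ≤ A * 1 := mul_le_mul_right mul_one_div_le_one _
      _ = A := mul_one _
  have hne2 : spanSingleton D⁰ (algebraMap D K x) *
      ((A : FractionalIdeal D⁰ K) * (I : FractionalIdeal D⁰ K)⁻¹) ≠ 0 := by
    intro h
    apply hAX
    have h' := congrArg (fun Z => spanSingleton D⁰ (algebraMap D K x)⁻¹ * Z) h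
    simpa only [← mul_assoc, spanSingleton_mul_spanSingleton, inv_mul_cancel₀ hx1,
      spanSingleton_one, one_mul, mul_zero] using h' 
  have h2 := s.star_mono _ _ hne2 (coe_ne hA0) hle
  rw [s.star_smul _ _ hx1 hAX, ← s.coe_cl hA0] at h2
  have h3 : algebraMap D K x * 1 ∈ ((s.cl A : Ideal D) : FractionalIdeal D⁰ K) :=
    h2 (mul_mem_mul (mem_spanSingleton_self _ _) h1)
  obtain ⟨y, hy, hxy⟩ := (mem_coeIdeal _).1 h3
  rw [mul_one] at hxy
  rwa [← IsFractionRing.injective D K hxy]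

end Aux

end StarOperation

/-- Let `D` be a `*`-SH domain and `I` a `*`-invertible integral `*`-ideal.
Then `I` is expressible, uniquely up to order, as a `*`-product of mutually `*`-comaximal
`*`-homogeneous ideals. -/
theorem starInvertible_factorization {D K : Type*} [CommRing D] [IsDomain D] [Field K]
    [Algebra D K] [IsFractionRing D K] (s : StarOperation D K) (hs : s.FiniteCharacter)
    (hSH : s.IsSHDomain) (I : Ideal D) (hstar : s.IsStarIdeal I)
    (hinv : s.StarInvertible I) :
    ∃ T : Multiset (Ideal D), (∀ J ∈ T, s.IsHomog J) ∧ T.Pairwise s.StarComaximal ∧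
      s.star ((T.prod : Ideal D) : FractionalIdeal D⁰ K) = (I : FractionalIdeal D⁰ K) ∧
      ∀ U : Multiset (Ideal D), (∀ J ∈ U, s.IsHomog J) → U.Pairwise s.StarComaximal →
        s.star ((U.prod : Ideal D) : FractionalIdeal D⁰ K) = (I : FractionalIdeal D⁰ K) →
        U = T := by
  classical
  have hI0 := hstar.1
  have hcl := (StarOperation.isStarIdeal_iff.1 hstar).2
  have hFT := StarOperation.ft_of_inv hs hI0 hinv
  obtain ⟨l0, hl0, hle⟩ : ∃ l : List (Ideal D), (∀ J ∈ l, s.IsHomog J) ∧ l.prod ≤ I := by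
    by_cases ht : I = ⊤
    · exact ⟨[], by simp, by simp [ht]⟩
    · obtain ⟨x, hx, hx0⟩ := Submodule.exists_mem_ne_zero_of_ne_bot hI0
      have hxu : ¬ IsUnit x := fun hu => ht (Ideal.eq_top_of_isUnit_mem _ hx hu)
      obtain ⟨T, hT, hTx⟩ := hSH x hx0 hxu
      induction T using Quotient.inductionOn with
      | h l =>
        have hl : ∀ J ∈ l, s.IsHomog J := fun J hJ => hT J hJ
        change s.star ((Multiset.prod (l : Multiset (Ideal D)) : Ideal D) :
          FractionalIdeal D⁰ K) = _ at hTx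
        rw [Multiset.prod_coe, StarOperation.star_eq_iff (StarOperation.prod_ne_bot hl)] at hTx
        refine ⟨l, hl, (s.le_cl _).trans (hTx.le.trans ?_)⟩
        rwa [Ideal.span_singleton_le_iff_mem]
  obtain ⟨l1, hl1, hp1, he1⟩ := StarOperation.grouping l0 hl0
  obtain ⟨l, hl, hp, -, he⟩ := StarOperation.refine_list hFT l1 hl1 hp1
  have hle1 : l1.prod ≤ I :=
    (s.le_cl _).trans (he1.le.trans ((s.cl_mono hle).trans hcl.le))
  rw [sup_eq_left.2 hle1, hcl] at he
  refine ⟨(l : Multiset (Ideal D)), fun J hJ => hl J (by simpa using hJ),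
    ⟨l, rfl, (StarOperation.pairwise_iff_aux hl).2 hp⟩, ?_, ?_⟩
  · rw [Multiset.prod_coe, StarOperation.star_eq_iff (StarOperation.prod_ne_bot hl)]
    exact he
  · rintro U hU ⟨u, rfl, hpu⟩ hUe
    have hu : ∀ J ∈ u, s.IsHomog J := fun J hJ => hU J (by simpa using hJ)
    rw [StarOperation.pairwise_iff_aux hu] at hpu
    rw [Multiset.prod_coe, StarOperation.star_eq_iff (StarOperation.prod_ne_bot hu)] at hUe
    rw [Multiset.coe_eq_coe, List.perm_ext_iff_of_nodup (StarOperation.nodup_aux hu hpu)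
      (StarOperation.nodup_aux hl hp)]
    intro A
    exact ⟨fun h => StarOperation.uniq_aux hu hl hpu hp (hUe.trans he.symm) h,
      fun h => StarOperation.uniq_aux hl hu hp hpu (he.trans hUe.symm) h⟩
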